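/- There exists an absolute constant c > 0 such that for every d ≥ 1, every finite set X ⊂ ℝ^d of size N ≥ 2, and every parameter ε ∈ (0, 1/2), there exist d' ≤ c·(log₂ N)/ε⁴ and a map f : ℝ^d → ℝ^{d'} such that for every terminal x ∈ X and every point p ∈ ℝ^d: ‖p − x‖ ≤ ‖f(p) − f(x)‖ ≤ (1 + ε)·‖p − x‖. -/

import Mathlib

/-! For a Gaussian Johnson–Lindenstrauss map `A` into `O(η⁻⁴ log N)` dimensions, the normalized
differences of terminals keep their pairwise inner products up to `η²`. Hence
`‖z‖ ≤ ‖A z‖ + η ∑ |cᵢ|` for every linear combination `z = ∑ cᵢ tᵢ` of them, the square root being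
responsible for the power `η⁻⁴`. By convex separation this says exactly what is needed to find, for
every vector `u`, some `v` with `‖v‖ ≤ ‖u‖` such that `⟪v, A tᵢ⟫` is within `η ‖u‖` of `⟪u, tᵢ⟫` for
all `i`. For a point `p` with nearest terminal `y`, take such a `v` for `u = p - y` and let
`f p = (A y + v, √(‖u‖² - ‖v‖²))`. Then `‖f p - f x‖² = ‖A (y - x)‖² + 2 ⟪v, A (y - x)⟫ + ‖u‖²`
differs from `‖p - x‖²` by at most `O(η) ‖p - x‖²`, as `‖u‖ ≤ ‖p - x‖`. -/

open MeasureTheory ProbabilityTheory Real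
open scoped InnerProductSpace

section ChiSquared

lemma gaussianPDFReal_zero_one_mul_exp_mul_sq (s x : ℝ) :
    gaussianPDFReal 0 1 x * exp (s * x ^ 2) = (√(2 * π))⁻¹ * exp (-(1 / 2 - s) * x ^ 2) := by
  simp only [gaussianPDFReal_def, NNReal.coe_one, mul_one, sub_zero]
  rw [mul_assoc, ← exp_add]
  ring_nf

lemma mgf_sq_gaussianReal {s : ℝ} (hs : s < 1 / 2) :
    mgf (fun x ↦ x ^ 2) (gaussianReal 0 1) s = √(1 - 2 * s)⁻¹ := by
  rw [mgf, integral_gaussianReal_eq_integral_smul one_ne_zero]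
  simp only [smul_eq_mul, gaussianPDFReal_zero_one_mul_exp_mul_sq]
  rw [integral_const_mul, integral_gaussian, ← sqrt_inv, ← sqrt_mul (by positivity)]
  have hne : 1 - 2 * s ≠ 0 := by linarith
  congr 1
  field_simp

lemma inv_one_sub_le_exp {t : ℝ} (ht : t ≤ 1 / 2) : (1 - t)⁻¹ ≤ exp (t + 2 * t ^ 2) := by
  rw [inv_le_iff_one_le_mul₀' (by linarith)]
  calc 1 ≤ (1 - t) * (t + 2 * t ^ 2 + 1) := by nlinarith [sq_nonneg t]
    _ ≤ (1 - t) * exp (t + 2 * t ^ 2) := by gcongr; exacts [by linarith, add_one_le_exp _]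

lemma sqrt_inv_one_sub_two_mul_le_exp {s : ℝ} (hs : s ≤ 1 / 4) :
    √(1 - 2 * s)⁻¹ ≤ exp (s + 4 * s ^ 2) := by
  rw [sqrt_le_left (exp_pos _).le]
  calc (1 - 2 * s)⁻¹ ≤ exp (2 * s + 2 * (2 * s) ^ 2) := inv_one_sub_le_exp (by linarith)
    _ = exp (s + 4 * s ^ 2) ^ 2 := by rw [← exp_nat_mul]; push_cast; ring_nf

variable {Ω κ : Type*} {mΩ : MeasurableSpace Ω} {μ : Measure Ω} [Fintype κ] {Z : κ → Ω → ℝ}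

lemma mgf_sum_sq_of_hasLaw_gaussianReal (hZ : ∀ i, HasLaw (Z i) (gaussianReal 0 1) μ)
    (hindep : iIndepFun Z μ) {s : ℝ} (hs : s < 1 / 2) :
    mgf (fun ω ↦ ∑ i, Z i ω ^ 2) μ s = √(1 - 2 * s)⁻¹ ^ Fintype.card κ := by
  have hmgf (i : κ) : mgf (fun ω ↦ Z i ω ^ 2) μ s = √(1 - 2 * s)⁻¹ := by
    rw [← mgf_sq_gaussianReal hs, ← (hZ i).map_eq, mgf_map (hZ i).aemeasurable (by fun_prop)]
    rfl
  have hindep_sq : iIndepFun (fun i ω ↦ Z i ω ^ 2) μ :=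
    hindep.comp (fun _ x ↦ x ^ 2) (fun _ ↦ by fun_prop)
  calc mgf (fun ω ↦ ∑ i, Z i ω ^ 2) μ s
      = mgf (∑ i, fun ω ↦ Z i ω ^ 2) μ s := by congr 1; ext ω; simp only [Finset.sum_apply]
    _ = ∏ i, mgf (fun ω ↦ Z i ω ^ 2) μ s :=
        hindep_sq.mgf_sum₀ (fun i ↦ (hZ i).aemeasurable.pow_const 2) _
    _ = √(1 - 2 * s)⁻¹ ^ Fintype.card κ := by simp only [hmgf, Finset.prod_const, Finset.card_univ]

lemma integrable_exp_mul_sum_sq_of_hasLaw_gaussianReal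
    (hZ : ∀ i, HasLaw (Z i) (gaussianReal 0 1) μ) (hindep : iIndepFun Z μ) {s : ℝ}
    (hs : s < 1 / 2) : Integrable (fun ω ↦ exp (s * ∑ i, Z i ω ^ 2)) μ := by
  refine .of_integral_ne_zero ?_
  rw [← mgf, mgf_sum_sq_of_hasLaw_gaussianReal hZ hindep hs]
  exact pow_ne_zero _ (sqrt_pos.2 (inv_pos.2 (by linarith))).ne'

lemma mgf_sum_sq_le_of_hasLaw_gaussianReal (hZ : ∀ i, HasLaw (Z i) (gaussianReal 0 1) μ)
    (hindep : iIndepFun Z μ) {s : ℝ} (hs : s ≤ 1 / 4) :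
    mgf (fun ω ↦ ∑ i, Z i ω ^ 2) μ s ≤ exp (Fintype.card κ * (s + 4 * s ^ 2)) := by
  rw [mgf_sum_sq_of_hasLaw_gaussianReal hZ hindep (by linarith), exp_nat_mul]
  gcongr
  exact sqrt_inv_one_sub_two_mul_le_exp hs

lemma measureReal_sum_sq_ge_le_of_hasLaw_gaussianReal
    (hZ : ∀ i, HasLaw (Z i) (gaussianReal 0 1) μ) (hindep : iIndepFun Z μ) {δ : ℝ}
    (hδ₀ : 0 ≤ δ) (hδ : δ ≤ 2) :
    μ.real {ω | (1 + δ) * Fintype.card κ ≤ ∑ i, Z i ω ^ 2} ≤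
      exp (-(δ ^ 2 * Fintype.card κ / 16)) := by
  have : IsProbabilityMeasure μ := hindep.isProbabilityMeasure
  calc _ ≤ exp (-(δ / 8) * ((1 + δ) * Fintype.card κ)) * mgf (fun ω ↦ ∑ i, Z i ω ^ 2) μ (δ / 8) :=
        measure_ge_le_exp_mul_mgf _ (by positivity)
          (integrable_exp_mul_sum_sq_of_hasLaw_gaussianReal hZ hindep (by linarith))
    _ ≤ exp (-(δ / 8) * ((1 + δ) * Fintype.card κ)) *
        exp (Fintype.card κ * (δ / 8 + 4 * (δ / 8) ^ 2)) := by
      gcongr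
      exact mgf_sum_sq_le_of_hasLaw_gaussianReal hZ hindep (by linarith)
    _ = exp (-(δ ^ 2 * Fintype.card κ / 16)) := by rw [← exp_add]; ring_nf

lemma measureReal_sum_sq_le_le_of_hasLaw_gaussianReal
    (hZ : ∀ i, HasLaw (Z i) (gaussianReal 0 1) μ) (hindep : iIndepFun Z μ) {δ : ℝ}
    (hδ₀ : 0 ≤ δ) :
    μ.real {ω | ∑ i, Z i ω ^ 2 ≤ (1 - δ) * Fintype.card κ} ≤
      exp (-(δ ^ 2 * Fintype.card κ / 16)) := by
  have : IsProbabilityMeasure μ := hindep.isProbabilityMeasure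
  calc _ ≤ exp (-(-δ / 8) * ((1 - δ) * Fintype.card κ)) *
        mgf (fun ω ↦ ∑ i, Z i ω ^ 2) μ (-δ / 8) :=
        measure_le_le_exp_mul_mgf _ (by linarith)
          (integrable_exp_mul_sum_sq_of_hasLaw_gaussianReal hZ hindep (by linarith))
    _ ≤ exp (-(-δ / 8) * ((1 - δ) * Fintype.card κ)) *
        exp (Fintype.card κ * (-δ / 8 + 4 * (-δ / 8) ^ 2)) := by
      gcongr
      exact mgf_sum_sq_le_of_hasLaw_gaussianReal hZ hindep (by linarith)
    _ = exp (-(δ ^ 2 * Fintype.card κ / 16)) := by rw [← exp_add]; ring_nf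

lemma measureReal_le_abs_sum_sq_sub_card_le_of_hasLaw_gaussianReal
    (hZ : ∀ i, HasLaw (Z i) (gaussianReal 0 1) μ) (hindep : iIndepFun Z μ) {δ : ℝ}
    (hδ₀ : 0 ≤ δ) (hδ : δ ≤ 2) :
    μ.real {ω | δ * Fintype.card κ ≤ |∑ i, Z i ω ^ 2 - Fintype.card κ|} ≤
      2 * exp (-(δ ^ 2 * Fintype.card κ / 16)) := by
  have : IsProbabilityMeasure μ := hindep.isProbabilityMeasure
  have hsubset : {ω | δ * Fintype.card κ ≤ |∑ i, Z i ω ^ 2 - Fintype.card κ|} ⊆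
      {ω | (1 + δ) * Fintype.card κ ≤ ∑ i, Z i ω ^ 2} ∪
      {ω | ∑ i, Z i ω ^ 2 ≤ (1 - δ) * Fintype.card κ} := by
    intro ω (hω : δ * Fintype.card κ ≤ |∑ i, Z i ω ^ 2 - Fintype.card κ|)
    rcases le_abs.1 hω with h | h
    · exact .inl (show (1 + δ) * Fintype.card κ ≤ ∑ i, Z i ω ^ 2 by linarith)
    · exact .inr (show ∑ i, Z i ω ^ 2 ≤ (1 - δ) * Fintype.card κ by linarith)
  calc _ ≤ _ := (measureReal_mono hsubset).trans (measureReal_union_le _ _)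
    _ ≤ _ := add_le_add (measureReal_sum_sq_ge_le_of_hasLaw_gaussianReal hZ hindep hδ₀ hδ)
      (measureReal_sum_sq_le_le_of_hasLaw_gaussianReal hZ hindep hδ₀)
    _ = _ := (two_mul _).symm

end ChiSquared

section JohnsonLindenstrauss

variable {E κ ι : Type*} [NormedAddCommGroup E] [InnerProductSpace ℝ E] [Fintype κ] [Fintype ι]

lemma hasLaw_inner_stdGaussian [FiniteDimensional ℝ E] [MeasurableSpace E] [BorelSpace E] {w : E}
    (hw : ‖w‖ = 1) : HasLaw (fun g ↦ ⟪w, g⟫_ℝ) (gaussianReal 0 1) (stdGaussian E) where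
  map_eq := by
    have h := IsGaussian.map_eq_gaussianReal (μ := stdGaussian E) (innerSL ℝ w)
    rw [integral_strongDual_stdGaussian, variance_dual_stdGaussian, innerSL_apply_norm, hw] at h
    rwa [one_pow, Real.toNNReal_one] at h

/-- The linear map `w ↦ m^{-1/2} (⟪w, gᵢ⟫)ᵢ` into `ℝᵐ`, where `m = card κ`. For independent standard
Gaussian vectors `gᵢ` it is the Johnson–Lindenstrauss map. -/
noncomputable def normalizedInnerMap (g : κ → E) : E →ₗ[ℝ] EuclideanSpace ℝ κ :=
  (√(Fintype.card κ))⁻¹ •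
    ((WithLp.linearEquiv 2 ℝ (κ → ℝ)).symm.toLinearMap ∘ₗ LinearMap.pi fun i ↦ innerₛₗ ℝ (g i))

lemma norm_normalizedInnerMap_sq (g : κ → E) (w : E) :
    ‖normalizedInnerMap g w‖ ^ 2 = (∑ i, ⟪w, g i⟫_ℝ ^ 2) / Fintype.card κ := by
  rw [normalizedInnerMap, LinearMap.smul_apply, norm_smul, mul_pow, norm_inv, inv_pow,
    Real.norm_of_nonneg (sqrt_nonneg _), sq_sqrt (Nat.cast_nonneg _),
    EuclideanSpace.real_norm_sq_eq, div_eq_inv_mul]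
  simp [real_inner_comm]

open NormedSpace (norm_smul_normalize norm_normalize_eq_one_iff)

lemma measureReal_lt_abs_norm_normalizedInnerMap_sq_sub_le [FiniteDimensional ℝ E]
    [MeasurableSpace E] [BorelSpace E] (w : E) {δ : ℝ} (hδ₀ : 0 ≤ δ) (hδ : δ ≤ 2) :
    (Measure.pi fun _ : κ ↦ stdGaussian E).real
        {g | δ * ‖w‖ ^ 2 < |‖normalizedInnerMap g w‖ ^ 2 - ‖w‖ ^ 2|} ≤
      2 * exp (-(δ ^ 2 * Fintype.card κ / 16)) := by
  rcases isEmpty_or_nonempty κ with hκ | hκ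
  · refine measureReal_le_one.trans ?_
    rw [Fintype.card_eq_zero, Nat.cast_zero, mul_zero, zero_div, neg_zero, exp_zero]
    norm_num
  rcases eq_or_ne w 0 with rfl | hw
  · simp only [norm_zero, map_zero, ne_eq, OfNat.ofNat_ne_zero, not_false_eq_true, zero_pow,
      mul_zero, sub_zero, abs_zero, lt_self_iff_false, Set.ofPred_false, measureReal_empty]
    positivity
  let u := NormedSpace.normalize w
  have hlaw (i : κ) : HasLaw (fun g : κ → E ↦ ⟪u, g i⟫_ℝ) (gaussianReal 0 1)
      (Measure.pi fun _ : κ ↦ stdGaussian E) :=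
    (hasLaw_inner_stdGaussian (norm_normalize_eq_one_iff.2 hw)).fun_comp
      (measurePreserving_eval (fun _ ↦ stdGaussian E) i).hasLaw
  have hindep : iIndepFun (fun i (g : κ → E) ↦ ⟪u, g i⟫_ℝ)
      (Measure.pi fun _ : κ ↦ stdGaussian E) :=
    iIndepFun_pi (X := fun _ v ↦ ⟪u, v⟫_ℝ) (fun _ ↦ by fun_prop)
  refine (measureReal_mono fun g hg ↦ ?_).trans
    (measureReal_le_abs_sum_sq_sub_card_le_of_hasLaw_gaussianReal hlaw hindep hδ₀ hδ)
  have hm : (0 : ℝ) < Fintype.card κ := by exact_mod_cast Fintype.card_pos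
  have hscale : ‖normalizedInnerMap g w‖ ^ 2 - ‖w‖ ^ 2 =
      ‖w‖ ^ 2 * (‖normalizedInnerMap g u‖ ^ 2 - 1) := by
    rw [← norm_smul_normalize w, map_smul, norm_smul, norm_norm, norm_smul_normalize]
    ring
  change δ * ‖w‖ ^ 2 < _ at hg
  rw [hscale, abs_mul, abs_of_nonneg (sq_nonneg _), mul_comm δ,
    mul_lt_mul_iff_right₀ (by positivity), norm_normalizedInnerMap_sq, div_sub_one hm.ne', abs_div,
    abs_of_pos hm, lt_div_iff₀ hm] at hg
  exact hg.le

lemma exists_linearMap_forall_abs_norm_sq_sub_le (w : ι → E) {δ : ℝ} (hδ₀ : 0 ≤ δ)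
    (hδ : δ ≤ 2) (hcard : 2 * Fintype.card ι * exp (-(δ ^ 2 * Fintype.card κ / 16)) < 1) :
    ∃ A : E →ₗ[ℝ] EuclideanSpace ℝ κ, ∀ i, |‖A (w i)‖ ^ 2 - ‖w i‖ ^ 2| ≤ δ * ‖w i‖ ^ 2 := by
  let K : Submodule ℝ E := Submodule.span ℝ (Set.range w)
  have : FiniteDimensional ℝ K := .span_of_finite ℝ (Set.finite_range w)
  borelize ↥K
  let w' (i : ι) : K := ⟨w i, Submodule.subset_span ⟨i, rfl⟩⟩
  let μ := Measure.pi fun _ : κ ↦ stdGaussian K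
  let bad (i : ι) : Set (κ → K) :=
    {g | δ * ‖w' i‖ ^ 2 < |‖normalizedInnerMap g (w' i)‖ ^ 2 - ‖w' i‖ ^ 2|}
  have hbad : μ.real (⋃ i, bad i) < 1 := by
    calc μ.real (⋃ i, bad i) ≤ ∑ i, μ.real (bad i) := measureReal_iUnion_fintype_le _
      _ ≤ ∑ _i : ι, 2 * exp (-(δ ^ 2 * Fintype.card κ / 16)) := Finset.sum_le_sum fun i _ ↦
          measureReal_lt_abs_norm_normalizedInnerMap_sq_sub_le (w' i) hδ₀ hδ
      _ = 2 * Fintype.card ι * exp (-(δ ^ 2 * Fintype.card κ / 16)) := by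
          rw [Finset.sum_const, Finset.card_univ, nsmul_eq_mul]; ring
      _ < 1 := hcard
  obtain ⟨g, hg⟩ : ∃ g, ∀ i, g ∉ bad i := by
    by_contra! h
    rw [Set.iUnion_eq_univ_iff.2 h, probReal_univ] at hbad
    exact hbad.false
  refine ⟨normalizedInnerMap fun i ↦ (g i : E), fun i ↦ ?_⟩
  have hgi : |‖normalizedInnerMap g (w' i)‖ ^ 2 - ‖w' i‖ ^ 2| ≤ δ * ‖w' i‖ ^ 2 := not_lt.1 (hg i)
  rwa [norm_normalizedInnerMap_sq] at hgi ⊢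

end JohnsonLindenstrauss

section AlmostPreservesInner

variable {E F ι : Type*} [NormedAddCommGroup E] [InnerProductSpace ℝ E] [NormedAddCommGroup F]
  [InnerProductSpace ℝ F]

/-- `A` preserves the inner products of the vectors `t i` up to an additive error `δ`. The error is
relative to the product of the norms, so that the `t i` need not be normalized. -/
def AlmostPreservesInner (δ : ℝ) (A : E →ₗ[ℝ] F) (t : ι → E) : Prop :=
  ∀ i j, |⟪A (t i), A (t j)⟫_ℝ - ⟪t i, t j⟫_ℝ| ≤ δ * (‖t i‖ * ‖t j‖)

lemma abs_inner_map_sub_inner_le (A : E →ₗ[ℝ] F) {δ : ℝ} {a b : E}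
    (hadd : |‖A (a + b)‖ ^ 2 - ‖a + b‖ ^ 2| ≤ δ * ‖a + b‖ ^ 2)
    (hsub : |‖A (a - b)‖ ^ 2 - ‖a - b‖ ^ 2| ≤ δ * ‖a - b‖ ^ 2) :
    |⟪A a, A b⟫_ℝ - ⟪a, b⟫_ℝ| ≤ δ * ((‖a‖ ^ 2 + ‖b‖ ^ 2) / 2) := by
  rw [map_add] at hadd
  rw [map_sub] at hsub
  rw [norm_add_sq_real, norm_add_sq_real, abs_le] at hadd
  rw [norm_sub_sq_real, norm_sub_sq_real, abs_le] at hsub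
  rw [abs_le]
  constructor <;> linarith

open NormedSpace (norm_smul_normalize norm_normalize_eq_one_iff normalize_zero_eq_zero)

lemma norm_normalize_le_one {V : Type*} [NormedAddCommGroup V] [NormedSpace ℝ V] (a : V) :
    ‖NormedSpace.normalize a‖ ≤ 1 := by
  rcases eq_or_ne a 0 with rfl | ha
  · rw [normalize_zero_eq_zero, norm_zero]; exact zero_le_one
  · exact (norm_normalize_eq_one_iff.2 ha).le

lemma real_inner_normalize_self (a : E) : ⟪a, NormedSpace.normalize a⟫_ℝ = ‖a‖ := by
  rw [NormedSpace.normalize, real_inner_smul_right, real_inner_self_eq_norm_mul_norm, ← mul_assoc,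
    inv_mul_mul_self]

lemma exists_linearMap_almostPreservesInner {κ : Type*} [Fintype κ] [Fintype ι]
    (t : ι → E) {δ : ℝ} (hδ₀ : 0 ≤ δ) (hδ : δ ≤ 2)
    (hcard : 4 * Fintype.card ι ^ 2 * exp (-(δ ^ 2 * Fintype.card κ / 16)) < 1) :
    ∃ A : E →ₗ[ℝ] EuclideanSpace ℝ κ, AlmostPreservesInner δ A t := by
  let u (i : ι) : E := NormedSpace.normalize (t i)
  obtain ⟨A, hA⟩ := exists_linearMap_forall_abs_norm_sq_sub_le (κ := κ)
    (Sum.elim (fun ij : ι × ι ↦ u ij.1 + u ij.2) fun ij : ι × ι ↦ u ij.1 - u ij.2) hδ₀ hδ (by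
      simp only [Fintype.card_sum, Fintype.card_prod]
      push_cast
      linarith)
  have hu (i j : ι) : |⟪A (u i), A (u j)⟫_ℝ - ⟪u i, u j⟫_ℝ| ≤ δ := by
    refine (abs_inner_map_sub_inner_le A (hA (.inl (i, j))) (hA (.inr (i, j)))).trans ?_
    refine mul_le_of_le_one_right hδ₀ ?_
    have hi := pow_le_one₀ (n := 2) (norm_nonneg (u i)) (norm_normalize_le_one (t i))
    have hj := pow_le_one₀ (n := 2) (norm_nonneg (u j)) (norm_normalize_le_one (t j))
    linarith
  refine ⟨A, fun i j ↦ ?_⟩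
  calc |⟪A (t i), A (t j)⟫_ℝ - ⟪t i, t j⟫_ℝ|
      = ‖t i‖ * ‖t j‖ * |⟪A (u i), A (u j)⟫_ℝ - ⟪u i, u j⟫_ℝ| := by
        conv_lhs => rw [← norm_smul_normalize (t i), ← norm_smul_normalize (t j)]
        simp only [map_smul, real_inner_smul_left, real_inner_smul_right, ← mul_sub, abs_mul,
          abs_norm, u]
        ring
    _ ≤ ‖t i‖ * ‖t j‖ * δ := by gcongr; exact hu i j
    _ = δ * (‖t i‖ * ‖t j‖) := mul_comm _ _

namespace AlmostPreservesInner

variable {δ η : ℝ} {A : E →ₗ[ℝ] F} {t : ι → E}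

lemma abs_norm_sq_sub_le (hA : AlmostPreservesInner δ A t) (i : ι) :
    |‖A (t i)‖ ^ 2 - ‖t i‖ ^ 2| ≤ δ * ‖t i‖ ^ 2 := by
  simpa only [real_inner_self_eq_norm_sq, ← pow_two] using hA i i

lemma norm_sum_sq_le [Fintype ι] (hA : AlmostPreservesInner δ A t) (c : ι → ℝ) :
    ‖∑ i, c i • t i‖ ^ 2 ≤ ‖A (∑ i, c i • t i)‖ ^ 2 + δ * (∑ i, |c i| * ‖t i‖) ^ 2 := by
  have hterm (i j : ι) : c i * c j * ⟪t i, t j⟫_ℝ ≤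
      c i * c j * ⟪A (t i), A (t j)⟫_ℝ + δ * (|c i| * ‖t i‖ * (|c j| * ‖t j‖)) := by
    rw [← sub_le_iff_le_add', ← mul_sub]
    calc c i * c j * (⟪t i, t j⟫_ℝ - ⟪A (t i), A (t j)⟫_ℝ)
        ≤ |c i| * |c j| * |⟪A (t i), A (t j)⟫_ℝ - ⟪t i, t j⟫_ℝ| := by
          rw [abs_sub_comm, ← abs_mul, ← abs_mul]; exact le_abs_self _
      _ ≤ |c i| * |c j| * (δ * (‖t i‖ * ‖t j‖)) := by gcongr; exact hA i j
      _ = δ * (|c i| * ‖t i‖ * (|c j| * ‖t j‖)) := by ring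
  calc ‖∑ i, c i • t i‖ ^ 2 = ∑ i, ∑ j, c i * c j * ⟪t i, t j⟫_ℝ := by
        rw [← real_inner_self_eq_norm_sq, sum_inner]
        simp only [inner_sum, real_inner_smul_left, real_inner_smul_right, mul_left_comm, mul_assoc]
    _ ≤ ∑ i, ∑ j, (c i * c j * ⟪A (t i), A (t j)⟫_ℝ + δ * (|c i| * ‖t i‖ * (|c j| * ‖t j‖))) :=
        Finset.sum_le_sum fun i _ ↦ Finset.sum_le_sum fun j _ ↦ hterm i j
    _ = ‖A (∑ i, c i • t i)‖ ^ 2 + δ * (∑ i, |c i| * ‖t i‖) ^ 2 := by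
        rw [← real_inner_self_eq_norm_sq, map_sum, sum_inner, pow_two (∑ i, |c i| * ‖t i‖),
          Finset.sum_mul_sum]
        simp only [map_smul, inner_sum, real_inner_smul_left, real_inner_smul_right,
          mul_left_comm, mul_assoc, Finset.sum_add_distrib, Finset.mul_sum]

lemma norm_sum_le [Fintype ι] (hA : AlmostPreservesInner (η ^ 2) A t) (hη : 0 ≤ η) (c : ι → ℝ) :
    ‖∑ i, c i • t i‖ ≤ ‖A (∑ i, c i • t i)‖ + η * ∑ i, |c i| * ‖t i‖ := by
  have hnonneg : 0 ≤ η * ∑ i, |c i| * ‖t i‖ := by positivity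
  refine le_of_sq_le_sq ((hA.norm_sum_sq_le c).trans ?_) (by positivity)
  nlinarith [mul_nonneg (norm_nonneg (A (∑ i, c i • t i))) hnonneg]

end AlmostPreservesInner

lemma mem_of_forall_exists_sum_mul_le [Fintype ι] {K : Set (ι → ℝ)} (hconvex : Convex ℝ K)
    (hclosed : IsClosed K) {b : ι → ℝ}
    (h : ∀ c : ι → ℝ, ∃ y ∈ K, ∑ i, c i * b i ≤ ∑ i, c i * y i) : b ∈ K := by
  classical
  by_contra hb
  obtain ⟨f, s, hfK, hfb⟩ := geometric_hahn_banach_closed_point hconvex hclosed hb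
  have hf (y : ι → ℝ) : f y = ∑ i, f (Pi.single i 1) * y i := by
    conv_lhs => rw [pi_eq_sum_univ' y, map_sum]
    simp only [map_smul, smul_eq_mul, mul_comm]
  obtain ⟨y, hyK, hy⟩ := h fun i ↦ f (Pi.single i 1)
  rw [← hf, ← hf] at hy
  exact (hfb.trans_le hy).not_gt (hfK y hyK)

lemma exists_norm_le_forall_abs_inner_sub_le [FiniteDimensional ℝ F] [Fintype ι] (a : ι → F)
    (b ε : ι → ℝ) {r : ℝ} (hr : 0 ≤ r) (hε : ∀ i, 0 ≤ ε i)
    (h : ∀ c : ι → ℝ, ∑ i, c i * b i ≤ r * ‖∑ i, c i • a i‖ + ∑ i, |c i| * ε i) :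
    ∃ v : F, ‖v‖ ≤ r ∧ ∀ i, |⟪v, a i⟫_ℝ - b i| ≤ ε i := by
  let L : F × (ι → ℝ) →ₗ[ℝ] ι → ℝ :=
    (LinearMap.pi fun i ↦ innerₛₗ ℝ (a i)).coprod LinearMap.id
  let S : Set (F × (ι → ℝ)) := Metric.closedBall 0 r ×ˢ Set.Icc (-ε) ε
  have hconvex : Convex ℝ (L '' S) :=
    ((convex_closedBall 0 r).prod (convex_Icc _ _)).linear_image L
  have hclosed : IsClosed (L '' S) := (((isCompact_closedBall 0 r).prod isCompact_Icc).image
    L.continuous_of_finiteDimensional).isClosed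
  suffices hb : b ∈ L '' S by
    obtain ⟨⟨v, e⟩, ⟨hv, he⟩, rfl⟩ := hb
    refine ⟨v, mem_closedBall_zero_iff.1 hv, fun i ↦ ?_⟩
    have := abs_le.2 ⟨he.1 i, he.2 i⟩
    simpa [L, real_inner_comm] using this
  refine mem_of_forall_exists_sum_mul_le hconvex hclosed fun c ↦ ?_
  let z : F := ∑ i, c i • a i
  let e (i : ι) : ℝ := NormedSpace.normalize (c i) * ε i
  have he (i : ι) : |e i| ≤ ε i := by
    rw [abs_mul, abs_of_nonneg (hε i)]
    exact mul_le_of_le_one_left (hε i) (norm_normalize_le_one (c i))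
  have hz : ‖r • NormedSpace.normalize z‖ ≤ r := by
    rw [norm_smul, Real.norm_of_nonneg hr]
    exact mul_le_of_le_one_right hr (norm_normalize_le_one z)
  -- This point of `S` maximizes the linear functional with coefficients `c`.
  refine ⟨L (r • NormedSpace.normalize z, e), Set.mem_image_of_mem L ⟨mem_closedBall_zero_iff.2 hz,
    fun i ↦ (abs_le.1 (he i)).1, fun i ↦ (abs_le.1 (he i)).2⟩, (h c).trans_eq ?_⟩
  calc r * ‖z‖ + ∑ i, |c i| * ε i = r * ⟪z, NormedSpace.normalize z⟫_ℝ + ∑ i, c i * e i := by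
        have hc (i : ι) : |c i| = c i * NormedSpace.normalize (c i) := by
          rw [← Real.norm_eq_abs, ← real_inner_normalize_self, Real.inner_apply]
        simp only [real_inner_normalize_self, hc, e, mul_assoc]
    _ = ∑ i, c i * (⟪a i, r • NormedSpace.normalize z⟫_ℝ + e i) := by
        simp only [z, sum_inner, real_inner_smul_left, real_inner_smul_right, mul_add,
          Finset.sum_add_distrib, Finset.mul_sum, mul_left_comm]

lemma AlmostPreservesInner.exists_norm_le_forall_abs_inner_map_sub_le [FiniteDimensional ℝ F]
    [Finite ι] {η : ℝ} {A : E →ₗ[ℝ] F} {t : ι → E} (hA : AlmostPreservesInner (η ^ 2) A t)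
    (hη : 0 ≤ η) (u : E) :
    ∃ v : F, ‖v‖ ≤ ‖u‖ ∧ ∀ i, |⟪v, A (t i)⟫_ℝ - ⟪u, t i⟫_ℝ| ≤ η * (‖u‖ * ‖t i‖) := by
  have := Fintype.ofFinite ι
  refine exists_norm_le_forall_abs_inner_sub_le (fun i ↦ A (t i)) (fun i ↦ ⟪u, t i⟫_ℝ)
    (fun i ↦ η * (‖u‖ * ‖t i‖)) (norm_nonneg u) (fun i ↦ by positivity) fun c ↦ ?_
  calc ∑ i, c i * ⟪u, t i⟫_ℝ = ⟪u, ∑ i, c i • t i⟫_ℝ := by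
        simp only [inner_sum, real_inner_smul_right]
    _ ≤ ‖u‖ * ‖∑ i, c i • t i‖ := real_inner_le_norm _ _
    _ ≤ ‖u‖ * (‖A (∑ i, c i • t i)‖ + η * ∑ i, |c i| * ‖t i‖) := by
        gcongr; exact hA.norm_sum_le hη c
    _ = ‖u‖ * ‖∑ i, c i • A (t i)‖ + ∑ i, |c i| * (η * (‖u‖ * ‖t i‖)) := by
        simp only [map_sum, map_smul, mul_add, Finset.mul_sum]
        congr! 2 with i
        ring

end AlmostPreservesInner

section Extension

variable {E F : Type*} [NormedAddCommGroup E] [InnerProductSpace ℝ E] [NormedAddCommGroup F]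
  [InnerProductSpace ℝ F]

lemma norm_toLp_sqrt_sq {V : Type*} [SeminormedAddCommGroup V] (w : V) {s : ℝ} (hs : 0 ≤ s) :
    ‖WithLp.toLp 2 (w, √s)‖ ^ 2 = ‖w‖ ^ 2 + s := by
  rw [WithLp.prod_norm_sq_eq_of_L2, WithLp.toLp_fst, WithLp.toLp_snd,
    Real.norm_of_nonneg (sqrt_nonneg s), sq_sqrt hs]

lemma abs_norm_add_sq_add_sub_norm_add_sq_le {w v : F} {u a : E} {η : ℝ} (hη : 0 ≤ η)
    (hw : |‖w‖ ^ 2 - ‖a‖ ^ 2| ≤ η ^ 2 * ‖a‖ ^ 2)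
    (hv : |⟪v, w⟫_ℝ - ⟪u, a⟫_ℝ| ≤ η * (‖u‖ * ‖a‖)) (hu : ‖u‖ ≤ ‖u + a‖) :
    |‖w + v‖ ^ 2 + (‖u‖ ^ 2 - ‖v‖ ^ 2) - ‖u + a‖ ^ 2| ≤ (4 * η ^ 2 + 4 * η) * ‖u + a‖ ^ 2 := by
  have ha : ‖a‖ ≤ 2 * ‖u + a‖ := by
    linarith [norm_le_add_norm_add a u, add_comm a u ▸ norm_le_add_norm_add a u]
  calc |‖w + v‖ ^ 2 + (‖u‖ ^ 2 - ‖v‖ ^ 2) - ‖u + a‖ ^ 2|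
      = |(‖w‖ ^ 2 - ‖a‖ ^ 2) + 2 * (⟪v, w⟫_ℝ - ⟪u, a⟫_ℝ)| := by
        rw [norm_add_sq_real, norm_add_sq_real, real_inner_comm v w]; ring_nf
    _ ≤ |‖w‖ ^ 2 - ‖a‖ ^ 2| + 2 * |⟪v, w⟫_ℝ - ⟪u, a⟫_ℝ| := by
        rw [← abs_two (α := ℝ), ← abs_mul, abs_two]; exact abs_add_le _ _
    _ ≤ η ^ 2 * ‖a‖ ^ 2 + 2 * (η * (‖u‖ * ‖a‖)) := by gcongr
    _ ≤ η ^ 2 * (2 * ‖u + a‖) ^ 2 + 2 * (η * (‖u + a‖ * (2 * ‖u + a‖))) := by gcongr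
    _ = (4 * η ^ 2 + 4 * η) * ‖u + a‖ ^ 2 := by ring

lemma AlmostPreservesInner.exists_forall_abs_norm_sub_sq_sub_le [FiniteDimensional ℝ F]
    {X : Finset E} (hX : X.Nonempty) {η : ℝ} {A : E →ₗ[ℝ] F}
    (hA : AlmostPreservesInner (η ^ 2) A fun xy : X × X ↦ (xy.1 - xy.2 : E)) (hη : 0 ≤ η) :
    ∃ f : E → WithLp 2 (F × ℝ), ∀ x ∈ X, ∀ p,
      |‖f p - f x‖ ^ 2 - ‖p - x‖ ^ 2| ≤ (4 * η ^ 2 + 4 * η) * ‖p - x‖ ^ 2 := by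
  choose y hyX hy using fun p ↦ X.exists_min_image (fun x ↦ ‖p - x‖) hX
  choose v hv hinner using
    fun p ↦ hA.exists_norm_le_forall_abs_inner_map_sub_le hη (p - y p)
  -- The last coordinate makes up for `‖v p‖` falling short of `‖p - y p‖`.
  let f (p : E) : WithLp 2 (F × ℝ) :=
    WithLp.toLp 2 (A (y p) + v p, √(‖p - y p‖ ^ 2 - ‖v p‖ ^ 2))
  refine ⟨f, fun x hx p ↦ ?_⟩
  have hyx : y x = x := by
    have := hy x x hx
    rwa [sub_self, norm_zero, norm_le_zero_iff, sub_eq_zero, eq_comm] at this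
  have hvx : v x = 0 := by
    have := hv x
    rwa [hyx, sub_self, norm_zero, norm_le_zero_iff] at this
  have hf : f p - f x =
      WithLp.toLp 2 (A (y p - x) + v p, √(‖p - y p‖ ^ 2 - ‖v p‖ ^ 2)) := by
    simp only [f, hyx, hvx, ← WithLp.toLp_sub, Prod.mk_sub_mk, add_zero, sub_self, norm_zero,
      sqrt_zero, sub_zero, map_sub, add_sub_right_comm]
  have hnonneg : 0 ≤ ‖p - y p‖ ^ 2 - ‖v p‖ ^ 2 := sub_nonneg.2 (by gcongr; exact hv p)
  have hsum : p - x = p - y p + (y p - x) := (sub_add_sub_cancel p (y p) x).symm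
  rw [hf, norm_toLp_sqrt_sq _ hnonneg, hsum]
  exact abs_norm_add_sq_add_sub_norm_add_sq_le hη (hA.abs_norm_sq_sub_le (⟨y p, hyX p⟩, ⟨x, hx⟩))
    (hinner p (⟨y p, hyX p⟩, ⟨x, hx⟩)) (hsum ▸ hy p x hx)

end Extension

section TerminalDimensionReduction

universe u

variable {E F : Type*} [SeminormedAddCommGroup E] [SeminormedAddCommGroup F]

/-- A terminal dimension reduction with distortion `D` for the set of terminals `X`, normalized to
be non-contracting. -/
def IsTerminalDimensionReduction (D : ℝ) (X : Set E) (f : E → F) : Prop :=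
  ∀ x ∈ X, ∀ p, ‖p - x‖ ≤ ‖f p - f x‖ ∧ ‖f p - f x‖ ≤ D * ‖p - x‖

lemma IsTerminalDimensionReduction.isometry_comp {G : Type*} [SeminormedAddCommGroup G] {D : ℝ}
    {X : Set E} {f : E → F} (hf : IsTerminalDimensionReduction D X f) {T : F → G}
    (hT : Isometry T) : IsTerminalDimensionReduction D X (T ∘ f) := fun x hx p ↦ by
  simpa only [Function.comp_apply, ← dist_eq_norm, hT.dist_eq] using hf x hx p

lemma isTerminalDimensionReduction_inv_sqrt_smul [NormedSpace ℝ F] {ε : ℝ} (hε₀ : 0 ≤ ε)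
    (hε : ε ≤ 1) {X : Set E} {f : E → F}
    (hf : ∀ x ∈ X, ∀ p, |‖f p - f x‖ ^ 2 - ‖p - x‖ ^ 2| ≤ ε / 2 * ‖p - x‖ ^ 2) :
    IsTerminalDimensionReduction (1 + ε) X fun p ↦ (√(1 - ε / 2))⁻¹ • f p := by
  intro x hx p
  have hs : 0 < 1 - ε / 2 := by linarith
  obtain ⟨hlower, hupper⟩ := abs_le.1 (hf x hx p)
  rw [← smul_sub, norm_smul, norm_inv, Real.norm_of_nonneg (sqrt_nonneg _),
    le_inv_mul_iff₀ (sqrt_pos.2 hs), inv_mul_le_iff₀ (sqrt_pos.2 hs)]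
  constructor
  · refine le_of_sq_le_sq ?_ (norm_nonneg _)
    rw [mul_pow, sq_sqrt hs.le]
    linarith
  · refine le_of_sq_le_sq ?_ (by positivity)
    have hε_sq : 1 + ε / 2 ≤ (1 - ε / 2) * (1 + ε) ^ 2 := by nlinarith [mul_nonneg hε₀ hε₀]
    calc ‖f p - f x‖ ^ 2 ≤ (1 + ε / 2) * ‖p - x‖ ^ 2 := by linarith
      _ ≤ (1 - ε / 2) * (1 + ε) ^ 2 * ‖p - x‖ ^ 2 := by gcongr
      _ = (√(1 - ε / 2) * ((1 + ε) * ‖p - x‖)) ^ 2 := by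
          rw [mul_pow, mul_pow, sq_sqrt hs.le, mul_assoc]

lemma four_mul_pow_four_mul_exp_lt_one {N η m : ℝ} (hN : 2 ≤ N) (hη : 0 < η)
    (hm : 96 * log N / η ^ 4 < m) : 4 * N ^ 4 * exp (-(η ^ 4 * m / 16)) < 1 := by
  have hN_pos : 0 < N := zero_lt_two.trans_le hN
  have hexponent : log (N ^ 6) < η ^ 4 * m / 16 := by
    rw [div_lt_iff₀ (by positivity)] at hm
    rw [log_pow]
    push_cast
    linarith
  calc 4 * N ^ 4 * exp (-(η ^ 4 * m / 16)) ≤ N ^ 2 * N ^ 4 * exp (-(η ^ 4 * m / 16)) := by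
        gcongr; nlinarith
    _ < N ^ 2 * N ^ 4 * exp (-log (N ^ 6)) := by gcongr
    _ = 1 := by
        rw [← pow_add, exp_neg, exp_log (by positivity), mul_inv_cancel₀ (by positivity)]

lemma finrank_withLp_euclideanSpace_prod (κ : Type*) [Fintype κ] :
    Module.finrank ℝ (WithLp 2 (EuclideanSpace ℝ κ × ℝ)) = Fintype.card κ + 1 := by
  rw [(WithLp.linearEquiv 2 ℝ (EuclideanSpace ℝ κ × ℝ)).finrank_eq, Module.finrank_prod,
    finrank_euclideanSpace, Module.finrank_self]

lemma exists_isTerminalDimensionReduction {E : Type*} [NormedAddCommGroup E]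
    [InnerProductSpace ℝ E] {X : Finset E} (hX : 2 ≤ X.card) {ε : ℝ} (hε₀ : 0 < ε) (hε : ε ≤ 1)
    {m : ℕ} (hm : 96 * log X.card / (ε / 10) ^ 4 < m) :
    ∃ f : E → EuclideanSpace ℝ (Fin (m + 1)), IsTerminalDimensionReduction (1 + ε) X f := by
  have hcard : 4 * (Fintype.card (X × X) : ℝ) ^ 2 *
      exp (-(((ε / 10) ^ 2) ^ 2 * Fintype.card (Fin m) / 16)) < 1 := by
    rw [Fintype.card_prod, Fintype.card_coe, Fintype.card_fin, Nat.cast_mul, ← pow_two, ← pow_mul,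
      ← pow_mul]
    exact four_mul_pow_four_mul_exp_lt_one (by exact_mod_cast hX) (by positivity) hm
  obtain ⟨A, hA⟩ := exists_linearMap_almostPreservesInner
    (fun xy : X × X ↦ (xy.1 - xy.2 : E)) (by positivity) (by nlinarith) hcard
  obtain ⟨f, hf⟩ := hA.exists_forall_abs_norm_sub_sq_sub_le (Finset.card_pos.1 (by omega))
    (by positivity)
  have hdistortion : 4 * (ε / 10) ^ 2 + 4 * (ε / 10) ≤ ε / 2 := by nlinarith
  have hreduction := isTerminalDimensionReduction_inv_sqrt_smul hε₀.le hε (X := (X : Set E))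
    fun x hx p ↦ (hf x hx p).trans (by gcongr)
  let b := (stdOrthonormalBasis ℝ (WithLp 2 (EuclideanSpace ℝ (Fin m) × ℝ))).reindex
    (finCongr ((finrank_withLp_euclideanSpace_prod (Fin m)).trans
      (congrArg (· + 1) (Fintype.card_fin m))))
  exact ⟨_, hreduction.isometry_comp b.repr.isometry⟩

lemma log_le_logb_two {x : ℝ} (hx : 1 ≤ x) : log x ≤ logb 2 x := by
  rw [logb, le_div_iff₀ (log_pos one_lt_two)]
  exact mul_le_of_le_one_right (log_nonneg hx) (log_two_lt_d9.le.trans (by norm_num))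

lemma floor_add_two_le_mul_logb_div_pow {N ε : ℝ} (hN : 2 ≤ N) (hε₀ : 0 < ε) (hε : ε ≤ 1) :
    (⌊96 * log N / (ε / 10) ^ 4⌋₊ : ℝ) + 2 ≤ (96 * 10 ^ 4 + 2) * logb 2 N / ε ^ 4 := by
  have hlog : 0 ≤ log N := log_nonneg (by linarith)
  have hone_le : 1 ≤ logb 2 N := by
    rw [le_logb_iff_rpow_le one_lt_two (by linarith), rpow_one]; exact hN
  calc (⌊96 * log N / (ε / 10) ^ 4⌋₊ : ℝ) + 2 ≤ 96 * log N / (ε / 10) ^ 4 + 2 := by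
        gcongr; exact Nat.floor_le (by positivity)
    _ = 96 * 10 ^ 4 * log N / ε ^ 4 + 2 * 1 / 1 := by field_simp
    _ ≤ 96 * 10 ^ 4 * logb 2 N / ε ^ 4 + 2 * logb 2 N / ε ^ 4 := by
        gcongr
        exacts [log_le_logb_two (by linarith), pow_le_one₀ hε₀.le hε]
    _ = (96 * 10 ^ 4 + 2) * logb 2 N / ε ^ 4 := by ring

theorem terminal_dimension_reduction_general :
    ∃ c > (0 : ℝ), ∀ (E : Type u) [NormedAddCommGroup E] [InnerProductSpace ℝ E] (X : Finset E),
      2 ≤ X.card → ∀ ε : ℝ, 0 < ε → ε ≤ 1 →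
      ∃ d' : ℕ, (d' : ℝ) ≤ c * logb 2 X.card / ε ^ 4 ∧
        ∃ f : E → EuclideanSpace ℝ (Fin d'), IsTerminalDimensionReduction (1 + ε) X f := by
  refine ⟨96 * 10 ^ 4 + 2, by norm_num, fun E _ _ X hX ε hε₀ hε ↦ ?_⟩
  let m := ⌊96 * log X.card / (ε / 10) ^ 4⌋₊ + 1
  refine ⟨m + 1, ?_, exists_isTerminalDimensionReduction hX hε₀ hε ?_⟩
  · have := floor_add_two_le_mul_logb_div_pow (N := X.card) (by exact_mod_cast hX) hε₀ hε
    push_cast [m]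
    linarith
  · exact_mod_cast Nat.lt_floor_add_one _

end TerminalDimensionReduction

/-- **Terminal dimension reduction with distortion `1 + ε`.** There is an absolute constant
`c > 0` such that for every finite set of terminals `X ⊂ ℝᵈ` of size `N ≥ 2` and every
`ε ∈ (0, 1/2)`, there are `d' ≤ c log₂ N / ε⁴` and `f : ℝᵈ → ℝ^{d'}` with
`‖p - x‖ ≤ ‖f p - f x‖ ≤ (1 + ε)‖p - x‖` for every terminal `x ∈ X` and every `p ∈ ℝᵈ`. -/
theorem terminal_dimension_reduction :
    ∃ c > (0 : ℝ), ∀ d : ℕ, 1 ≤ d → ∀ (N : ℕ) (X : Finset (EuclideanSpace ℝ (Fin d))),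
      X.card = N → 2 ≤ N → ∀ ε : ℝ, 0 < ε → ε < 1 / 2 →
      ∃ d' : ℕ, (d' : ℝ) ≤ c * Real.logb 2 N / ε ^ 4 ∧
        ∃ f : EuclideanSpace ℝ (Fin d) → EuclideanSpace ℝ (Fin d'),
          ∀ x ∈ X, ∀ p : EuclideanSpace ℝ (Fin d),
            ‖p - x‖ ≤ ‖f p - f x‖ ∧ ‖f p - f x‖ ≤ (1 + ε) * ‖p - x‖ := by
  obtain ⟨c, hc, h⟩ := terminal_dimension_reduction_general
  exact ⟨c, hc, fun d _ N X hN h2 ε hε₀ hε ↦ by subst hN; exact h _ X h2 ε hε₀ (by linarith)⟩
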